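/- arXiv:1511.05910 — 3 statements merged into one kernel-verified Lean document; each statement's English description precedes it below -/
import Mathlib

section
/- (Lemma 5.7 (ii)) Let u : Θ → ℝ be bounded, n ≥ 1, and λ_i a fixed partition-jump datum. Then u^{n,λ_i} is locally Lipschitz continuous in the space variable, uniformly in time: for every R > 0 there exists a constant C (depending on n, p, T, R, λ_i and ‖u‖_∞) such that |u^{n,λ_i}(s, x) − u^{n,λ_i}(s, x')| ≤ C |x − x'| for all s ∈ (s_i, T] and all x, x' ∈ ℝ^d with |x|, |x'| ≤ R. -/
open MeasureTheory Set Filter Topology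

noncomputable section

/-- `ℝ^d` with the Euclidean norm. -/
abbrev E (d : ℕ) := EuclideanSpace ℝ (Fin d)

/-- A point `θ = (t, ω)` of `Θ = [0,T] × Ω`, where `Ω` is the set of continuous
paths `[0,T] → ℝ^d` starting from the origin. -/
structure Theta (T : ℝ) (d : ℕ) where
  t : ℝ
  path : ℝ → E d
  ht : t ∈ Set.Icc 0 T
  cont : ContinuousOn path (Set.Icc 0 T)
  init : path 0 = 0

/-- `‖f‖_q^q := ‖f T‖^q + ∫_0^T ‖f s‖^q ds`. -/
def pnormPow (T q : ℝ) {d : ℕ} (f : ℝ → E d) : ℝ :=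
  ‖f T‖ ^ q + ∫ s in (0:ℝ)..T, ‖f s‖ ^ q

/-- `‖f‖_q := (‖f T‖^q + ∫_0^T ‖f s‖^q ds)^(1/q)`. -/
def pnorm (T q : ℝ) {d : ℕ} (f : ℝ → E d) : ℝ := (pnormPow T q f) ^ (1 / q)

/-- The pseudo-distance `d_p(θ,θ') = |t - t'| + ‖ω_{t∧·} - ω'_{t'∧·}‖_p`. -/
def dpDist (T p : ℝ) {d : ℕ} (θ θ' : Theta T d) : ℝ :=
  |θ.t - θ'.t| + pnorm T p (fun s => θ.path (min θ.t s) - θ'.path (min θ'.t s))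

/-- The set `𝓛_{t,s}` of monotone time changes: for `s > 0`, nondecreasing
`ℓ : [0,T] → ℝ` restricting to an increasing bijection from `[0,t]` onto `[0,s]`
with `ℓ(r) = r - t + s` on `(t,T]`; for `s = 0` the single function `ℓ^{t,0}`. -/
def LL (T t s : ℝ) : Set (ℝ → ℝ) :=
  if s = 0 then {fun r => if r ≤ t then 0 else r - t}
  else {ℓ | MonotoneOn ℓ (Set.Icc 0 T) ∧ StrictMonoOn ℓ (Set.Icc 0 t) ∧
        Set.BijOn ℓ (Set.Icc 0 t) (Set.Icc 0 s) ∧ ∀ r ∈ Set.Ioc t T, ℓ r = r - t + s}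

/-- `‖ℓ - I‖_∞ := sup_{0 ≤ r ≤ T} |ℓ(r) - r|`. -/
def supId (T : ℝ) (ℓ : ℝ → ℝ) : ℝ := ⨆ r : Set.Icc (0:ℝ) T, |ℓ r - (r : ℝ)|

/-- The penalization `Φ(s,η,θ,ℓ) := ‖ℓ - I‖_∞^{2/(3p+3)} + ‖η_{s∧ℓ(·)} - ω_{t∧·}‖_{p+1}^{p+1}`. -/
def Phi (T p : ℝ) {d : ℕ} (s : ℝ) (η : ℝ → E d) (θ : Theta T d) (ℓ : ℝ → ℝ) : ℝ :=
  (supId T ℓ) ^ (2 / (3 * p + 3)) +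
    pnormPow T (p + 1) (fun r => η (min s (ℓ r)) - θ.path (min θ.t r))

/-- The regularization
`u^n(s,η) := sup { u(θ) - n Φ(s,η,θ,ℓ) : θ ∈ Θ \ {𝟎}, ℓ ∈ 𝓛_{t,s} }`. -/
def reg (T p : ℝ) {d : ℕ} (u : Theta T d → ℝ) (n : ℕ) (s : ℝ) (η : ℝ → E d) : ℝ :=
  sSup { x | ∃ θ : Theta T d, ∃ ℓ : ℝ → ℝ, (θ.t, θ.path) ≠ (0, 0) ∧ ℓ ∈ LL T θ.t s ∧
        x = u θ - (n : ℝ) * Phi T p s η θ ℓ }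

/-- A càdlàg path on `[0,T]`: right-continuous with left limits. -/
def Cadlag (T : ℝ) {d : ℕ} (η : ℝ → E d) : Prop :=
  (∀ x ∈ Set.Ico (0:ℝ) T, ContinuousWithinAt η (Set.Ici x) x) ∧
  (∀ x ∈ Set.Ioc (0:ℝ) T, ∃ l : E d, Filter.Tendsto η (nhdsWithin x (Set.Iio x)) (𝓝 l))

/-- The piecewise constant path `η^{λ_i}(x)_s = Σ_j x_j 1_{{s ≥ s_j}}`. -/
def pcPath {d i : ℕ} (sVec : Fin i → ℝ) (xVec : Fin i → E d) : ℝ → E d :=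
  fun r => ∑ j : Fin i, if sVec j ≤ r then xVec j else 0

/-!
A competitor `(θ, ℓ)` enters the supremum defining `u^n(s, η)` through `u θ - n Φ(s, η, θ, ℓ)`.
Comparing with the null path stopped at `s`, run without time change, shows that only competitors
with `n Φ ≤ 2M + n (1 + T) K^(p+1)` matter when `|u| ≤ M` and `|η| ≤ K`. By convexity of `a ↦ a^q`,
moving `η` uniformly by `δ ≤ D` changes `‖·‖_q^q` by at most `δ / D` times an affine function of
`‖·‖_q^q` itself, which is therefore controlled on the competitors that matter. Hence `u^n(s, ·)`
is Lipschitz in the uniform norm on bounded sets of paths, with a constant independent of `s`; the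
path `η^{λ_i}(x)` depends on `x` in a 1-Lipschitz way.
-/

lemma add_rpow_le_rpow_add_div_mul {q a δ D : ℝ} (hq : 1 ≤ q) (ha : 0 ≤ a) (hδ : 0 ≤ δ)
    (hD : 0 < D) (hδD : δ ≤ D) :
    (a + δ) ^ q ≤ a ^ q + δ / D * (2 ^ (q - 1) * (a ^ q + D ^ q)) := by
  have hw : 0 ≤ δ / D := by positivity
  have hw' : 0 ≤ 1 - δ / D := sub_nonneg.2 ((div_le_one hD).2 hδD)
  have hcomb : (1 - δ / D) • a + (δ / D) • (a + D) = a + δ := by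
    simp only [smul_eq_mul]
    field_simp
    ring
  have hpow : (a + D) ^ q ≤ 2 ^ (q - 1) * (a ^ q + D ^ q) := by
    exact_mod_cast NNReal.rpow_add_le_mul_rpow_add_rpow ⟨a, ha⟩ ⟨D, hD.le⟩ hq
  have hconv := (convexOn_rpow hq).2 (mem_Ici.2 ha) (mem_Ici.2 (add_nonneg ha hD.le)) hw' hw
    (sub_add_cancel _ _)
  rw [hcomb] at hconv
  calc (a + δ) ^ q ≤ (1 - δ / D) * a ^ q + δ / D * (a + D) ^ q := hconv
    _ ≤ 1 * a ^ q + δ / D * (2 ^ (q - 1) * (a ^ q + D ^ q)) := by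
      gcongr
      exact sub_le_self _ hw
    _ = _ := by rw [one_mul]

section pnormPow

variable {T q : ℝ} {d : ℕ} {f g : ℝ → E d}

lemma pnormPow_nonneg (hT : 0 ≤ T) : 0 ≤ pnormPow T q f :=
  add_nonneg (by positivity) (intervalIntegral.integral_nonneg hT fun _ _ ↦ by positivity)

lemma pnormPow_le_of_norm_le {K : ℝ} (hT : 0 ≤ T) (hq : 0 ≤ q)
    (hf : IntervalIntegrable (fun r ↦ ‖f r‖ ^ q) volume 0 T)
    (hK : ∀ r ∈ Icc 0 T, ‖f r‖ ≤ K) : pnormPow T q f ≤ (1 + T) * K ^ q := by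
  have hpow : ∀ r ∈ Icc 0 T, ‖f r‖ ^ q ≤ K ^ q := fun r hr ↦
    Real.rpow_le_rpow (norm_nonneg _) (hK r hr) hq
  have hint : ∫ r in (0 : ℝ)..T, ‖f r‖ ^ q ≤ T * K ^ q := by
    simpa using intervalIntegral.integral_mono_on hT hf intervalIntegrable_const hpow
  calc pnormPow T q f ≤ K ^ q + T * K ^ q := add_le_add (hpow T (right_mem_Icc.2 hT)) hint
    _ = (1 + T) * K ^ q := by ring

lemma pnormPow_le_add_of_norm_sub_le {δ D : ℝ} (hT : 0 ≤ T) (hq : 1 ≤ q) (hD : 0 < D)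
    (hδD : δ ≤ D) (hf : IntervalIntegrable (fun r ↦ ‖f r‖ ^ q) volume 0 T)
    (hg : IntervalIntegrable (fun r ↦ ‖g r‖ ^ q) volume 0 T)
    (hfg : ∀ r ∈ Icc 0 T, ‖f r - g r‖ ≤ δ) :
    pnormPow T q g ≤
      pnormPow T q f + δ / D * (2 ^ (q - 1) * (pnormPow T q f + (1 + T) * D ^ q)) := by
  set c := δ / D * 2 ^ (q - 1) with hc
  have hpow : ∀ r ∈ Icc 0 T, ‖g r‖ ^ q ≤ ‖f r‖ ^ q + c * (‖f r‖ ^ q + D ^ q) := fun r hr ↦ by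
    rw [hc, mul_assoc]
    have hgr : ‖g r‖ ≤ ‖f r‖ + δ :=
      (norm_le_norm_add_norm_sub (f r) (g r)).trans (by gcongr; exact hfg r hr)
    exact (Real.rpow_le_rpow (norm_nonneg _) hgr (by linarith)).trans
      (add_rpow_le_rpow_add_div_mul hq (norm_nonneg _) ((norm_nonneg _).trans (hfg r hr)) hD hδD)
  have hfD : IntervalIntegrable (fun r ↦ c * (‖f r‖ ^ q + D ^ q)) volume 0 T :=
    (hf.add intervalIntegrable_const).const_mul c
  have hint : ∫ r in (0 : ℝ)..T, ‖g r‖ ^ q ≤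
      (∫ r in (0 : ℝ)..T, ‖f r‖ ^ q) + c * ((∫ r in (0 : ℝ)..T, ‖f r‖ ^ q) + T * D ^ q) :=
    calc ∫ r in (0 : ℝ)..T, ‖g r‖ ^ q
        ≤ ∫ r in (0 : ℝ)..T, (‖f r‖ ^ q + c * (‖f r‖ ^ q + D ^ q)) :=
          intervalIntegral.integral_mono_on hT hg (hf.add hfD) hpow
      _ = _ := by
          rw [intervalIntegral.integral_add hf hfD, intervalIntegral.integral_const_mul,
            intervalIntegral.integral_add hf intervalIntegrable_const,
            intervalIntegral.integral_const, sub_zero, smul_eq_mul]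
  rw [← mul_assoc, ← hc]
  unfold pnormPow
  linarith [hpow T (right_mem_Icc.2 hT)]

end pnormPow

section TimeChange

variable {T t s : ℝ} {ℓ : ℝ → ℝ}

lemma supId_nonneg : 0 ≤ supId T ℓ :=
  Real.iSup_nonneg fun _ ↦ abs_nonneg _

lemma supId_id : supId T id = 0 := by
  simp [supId]

lemma mem_LL_iff_of_ne_zero (hs : s ≠ 0) : ℓ ∈ LL T t s ↔
    MonotoneOn ℓ (Icc 0 T) ∧ StrictMonoOn ℓ (Icc 0 t) ∧
      BijOn ℓ (Icc 0 t) (Icc 0 s) ∧ ∀ r ∈ Ioc t T, ℓ r = r - t + s := by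
  rw [LL, if_neg hs]
  rfl

lemma id_mem_LL (hs : s ≠ 0) : id ∈ LL T s s :=
  (mem_LL_iff_of_ne_zero hs).2
    ⟨monotone_id.monotoneOn _, strictMono_id.strictMonoOn _, bijOn_id _,
      fun r _ ↦ (sub_add_cancel r s).symm⟩

lemma monotoneOn_of_mem_LL (hs : s ≠ 0) (hℓ : ℓ ∈ LL T t s) : MonotoneOn ℓ (Icc 0 T) :=
  ((mem_LL_iff_of_ne_zero hs).1 hℓ).1

lemma nonneg_of_mem_LL (hs : s ≠ 0) (ht : 0 ≤ t) (hℓ : ℓ ∈ LL T t s) {r : ℝ}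
    (hr : r ∈ Icc 0 T) : 0 ≤ ℓ r := by
  obtain ⟨hmono, -, hbij, -⟩ := (mem_LL_iff_of_ne_zero hs).1 hℓ
  calc 0 ≤ ℓ 0 := (hbij.mapsTo (left_mem_Icc.2 ht)).1
    _ ≤ ℓ r := hmono (left_mem_Icc.2 (hr.1.trans hr.2)) hr hr.1

lemma min_mem_Icc_of_mem_LL (hs : s ∈ Ioc 0 T) (ht : 0 ≤ t) (hℓ : ℓ ∈ LL T t s) {r : ℝ}
    (hr : r ∈ Icc 0 T) : min s (ℓ r) ∈ Icc 0 T :=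
  ⟨le_min hs.1.le (nonneg_of_mem_LL hs.1.ne' ht hℓ hr), (min_le_left _ _).trans hs.2⟩

end TimeChange

namespace Theta

variable {T : ℝ} {d : ℕ}

lemma horizon_nonneg (θ : Theta T d) : 0 ≤ T :=
  θ.ht.1.trans θ.ht.2

lemma continuousOn_stopped (θ : Theta T d) :
    ContinuousOn (fun r ↦ θ.path (min θ.t r)) (Icc 0 T) :=
  θ.cont.comp (by fun_prop) fun _ hr ↦
    ⟨le_min θ.ht.1 hr.1, (min_le_right _ _).trans hr.2⟩

/-- The point `(s, 0)` of `Θ`: the null path stopped at time `s`. -/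
def null (d : ℕ) {s : ℝ} (hs : s ∈ Icc 0 T) : Theta T d :=
  ⟨s, 0, hs, continuousOn_const, rfl⟩

/-- The path `η_{s∧ℓ(·)} - ω_{t∧·}` whose `(p+1)`-norm is penalized in `Phi`. -/
def deviation (s : ℝ) (η : ℝ → E d) (θ : Theta T d) (ℓ : ℝ → ℝ) : ℝ → E d :=
  fun r ↦ η (min s (ℓ r)) - θ.path (min θ.t r)

variable {s K q : ℝ} {η : ℝ → E d} {θ : Theta T d} {ℓ : ℝ → ℝ}

lemma aemeasurable_deviation (hη : Measurable η) (hℓ : MonotoneOn ℓ (Icc 0 T)) :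
    AEMeasurable (deviation s η θ ℓ) (volume.restrict (Icc 0 T)) := by
  have hmin : AEMeasurable (fun r ↦ min s (ℓ r)) (volume.restrict (Icc 0 T)) :=
    aemeasurable_const.min (aemeasurable_restrict_of_monotoneOn measurableSet_Icc hℓ)
  exact (hη.comp_aemeasurable hmin).sub (θ.continuousOn_stopped.aemeasurable measurableSet_Icc)

lemma intervalIntegrable_norm_deviation_rpow (hq : 0 ≤ q) (hs : s ∈ Ioc 0 T)
    (hη : Measurable η) (hK : ∀ r ∈ Icc 0 T, ‖η r‖ ≤ K) (hℓ : ℓ ∈ LL T θ.t s) :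
    IntervalIntegrable (fun r ↦ ‖deviation s η θ ℓ r‖ ^ q) volume 0 T := by
  obtain ⟨B, hB⟩ := isCompact_Icc.exists_bound_of_continuousOn θ.continuousOn_stopped
  have hbound : ∀ r ∈ Icc 0 T, ‖deviation s η θ ℓ r‖ ≤ K + B := fun r hr ↦
    (norm_sub_le _ _).trans
      (add_le_add (hK _ (min_mem_Icc_of_mem_LL hs θ.ht.1 hℓ hr)) (hB r hr))
  have hmeas := (aemeasurable_deviation (s := s) (θ := θ) hη
    (monotoneOn_of_mem_LL hs.1.ne' hℓ)).norm.pow_const q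
  rw [intervalIntegrable_iff_integrableOn_Icc_of_le θ.horizon_nonneg]
  refine Integrable.of_bound hmeas.aestronglyMeasurable ((K + B) ^ q)
    (ae_restrict_of_forall_mem measurableSet_Icc fun r hr ↦ ?_)
  rw [Real.norm_of_nonneg (by positivity)]
  exact Real.rpow_le_rpow (norm_nonneg _) (hbound r hr) hq

end Theta

section Phi

variable {T p s K : ℝ} {d : ℕ} {η η' : ℝ → E d} {θ : Theta T d} {ℓ : ℝ → ℝ}

lemma Phi_eq : Phi T p s η θ ℓ =
    supId T ℓ ^ (2 / (3 * p + 3)) + pnormPow T (p + 1) (θ.deviation s η ℓ) :=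
  rfl

lemma pnormPow_deviation_le_Phi : pnormPow T (p + 1) (θ.deviation s η ℓ) ≤ Phi T p s η θ ℓ :=
  le_add_of_nonneg_left (Real.rpow_nonneg supId_nonneg _)

lemma Phi_nonneg : 0 ≤ Phi T p s η θ ℓ :=
  (pnormPow_nonneg θ.horizon_nonneg).trans pnormPow_deviation_le_Phi

lemma Phi_null_id_le (hp : 0 ≤ p) (hs : s ∈ Ioc 0 T) (hη : Measurable η)
    (hK : ∀ r ∈ Icc 0 T, ‖η r‖ ≤ K) :
    Phi T p s η (Theta.null d (Ioc_subset_Icc_self hs)) id ≤ (1 + T) * K ^ (p + 1) := by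
  have hid : id ∈ LL T (Theta.null d (Ioc_subset_Icc_self hs)).t s := id_mem_LL hs.1.ne'
  rw [Phi_eq, supId_id, Real.zero_rpow (by positivity), zero_add]
  refine pnormPow_le_of_norm_le (hs.1.le.trans hs.2) (by positivity)
    (Theta.intervalIntegrable_norm_deviation_rpow (by positivity) hs hη hK hid) fun r hr ↦ ?_
  have hdev : (Theta.null d (Ioc_subset_Icc_self hs)).deviation s η id r = η (min s r) :=
    sub_zero _
  rw [hdev]
  exact hK _ (min_mem_Icc_of_mem_LL hs hs.1.le hid hr)

lemma Phi_le_add_of_norm_sub_le {δ D : ℝ} (hp : 0 ≤ p) (hs : s ∈ Ioc 0 T) (hD : 0 < D)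
    (hδD : δ ≤ D) (hη : Measurable η) (hη' : Measurable η')
    (hK : ∀ r ∈ Icc 0 T, ‖η r‖ ≤ K) (hK' : ∀ r ∈ Icc 0 T, ‖η' r‖ ≤ K)
    (hδ : ∀ r ∈ Icc 0 T, ‖η r - η' r‖ ≤ δ) (hℓ : ℓ ∈ LL T θ.t s) :
    Phi T p s η' θ ℓ ≤
      Phi T p s η θ ℓ + δ / D * (2 ^ p * (Phi T p s η θ ℓ + (1 + T) * D ^ (p + 1))) := by
  have hT : 0 ≤ T := θ.horizon_nonneg
  have hδ0 : 0 ≤ δ := (norm_nonneg _).trans (hδ T (right_mem_Icc.2 hT))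
  have hdev : ∀ r ∈ Icc 0 T, ‖θ.deviation s η ℓ r - θ.deviation s η' ℓ r‖ ≤ δ := fun r hr ↦ by
    simp only [Theta.deviation, sub_sub_sub_cancel_right]
    exact hδ _ (min_mem_Icc_of_mem_LL hs θ.ht.1 hℓ hr)
  have hnorm := pnormPow_le_add_of_norm_sub_le hT (by linarith : 1 ≤ p + 1) hD hδD
    (Theta.intervalIntegrable_norm_deviation_rpow (by positivity) hs hη hK hℓ)
    (Theta.intervalIntegrable_norm_deviation_rpow (by positivity) hs hη' hK' hℓ) hdev
  rw [add_sub_cancel_right] at hnorm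
  calc Phi T p s η' θ ℓ
      ≤ Phi T p s η θ ℓ + δ / D *
          (2 ^ p * (pnormPow T (p + 1) (θ.deviation s η ℓ) + (1 + T) * D ^ (p + 1))) := by
        rw [Phi_eq, Phi_eq]
        linarith
    _ ≤ _ := by
        gcongr
        exact pnormPow_deviation_le_Phi

end Phi

section pcPath

variable {d i m : ℕ}

lemma measurable_pcPath (sVec : Fin i → ℝ) (xVec : Fin i → E d) :
    Measurable (pcPath sVec xVec) :=
  Finset.measurable_sum _ fun _ _ ↦
    Measurable.ite measurableSet_Ici measurable_const measurable_const

lemma norm_pcPath_le (sVec : Fin i → ℝ) (xVec : Fin i → E d) (r : ℝ) :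
    ‖pcPath sVec xVec r‖ ≤ ∑ j, ‖xVec j‖ := by
  refine norm_sum_le_of_le _ fun j _ ↦ ?_
  split_ifs <;> simp

lemma norm_pcPath_snoc_le {R : ℝ} {x : E d} (hx : ‖x‖ ≤ R) (sVec : Fin (m + 1) → ℝ)
    (xs : Fin m → E d) (r : ℝ) :
    ‖pcPath sVec (Fin.snoc xs x : Fin (m + 1) → E d) r‖ ≤ ∑ j, ‖xs j‖ + R := by
  refine (norm_pcPath_le _ _ _).trans ?_
  simpa [Fin.sum_univ_castSucc] using hx

lemma norm_pcPath_snoc_sub_le (sVec : Fin (m + 1) → ℝ) (xs : Fin m → E d) (x x' : E d) (r : ℝ) :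
    ‖pcPath sVec (Fin.snoc xs x : Fin (m + 1) → E d) r -
      pcPath sVec (Fin.snoc xs x' : Fin (m + 1) → E d) r‖ ≤ ‖x - x'‖ := by
  simp only [pcPath, Fin.sum_univ_castSucc, Fin.snoc_castSucc, Fin.snoc_last,
    add_sub_add_left_eq_sub]
  split_ifs <;> simp

end pcPath

section Regularization

variable {T p s K M : ℝ} {d : ℕ} {u : Theta T d → ℝ} {n : ℕ} {η η' : ℝ → E d}

/-- The set of competing values whose supremum is `reg T p u n s η`. -/
def regValues (T p : ℝ) {d : ℕ} (u : Theta T d → ℝ) (n : ℕ) (s : ℝ) (η : ℝ → E d) : Set ℝ :=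
  {y | ∃ θ : Theta T d, ∃ ℓ : ℝ → ℝ, (θ.t, θ.path) ≠ (0, 0) ∧ ℓ ∈ LL T θ.t s ∧
    y = u θ - (n : ℝ) * Phi T p s η θ ℓ}

lemma bddAbove_regValues (hM : ∀ θ, |u θ| ≤ M) : BddAbove (regValues T p u n s η) := by
  refine ⟨M, ?_⟩
  rintro _ ⟨θ, ℓ, -, -, rfl⟩
  exact (sub_le_self _ (mul_nonneg n.cast_nonneg Phi_nonneg)).trans (le_of_abs_le (hM θ))

lemma null_id_mem_regValues (hs : s ∈ Ioc 0 T) :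
    u (Theta.null d (Ioc_subset_Icc_self hs)) -
      n * Phi T p s η (Theta.null d (Ioc_subset_Icc_self hs)) id ∈ regValues T p u n s η :=
  ⟨_, id, fun h ↦ hs.1.ne' (congrArg Prod.fst h), id_mem_LL hs.1.ne', rfl⟩

lemma neg_sub_le_reg (hp : 0 ≤ p) (hM : ∀ θ, |u θ| ≤ M) (hs : s ∈ Ioc 0 T)
    (hη : Measurable η) (hK : ∀ r ∈ Icc 0 T, ‖η r‖ ≤ K) :
    -M - n * ((1 + T) * K ^ (p + 1)) ≤ reg T p u n s η :=
  calc -M - n * ((1 + T) * K ^ (p + 1))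
      ≤ u (Theta.null d (Ioc_subset_Icc_self hs)) -
          n * Phi T p s η (Theta.null d (Ioc_subset_Icc_self hs)) id := by
        gcongr
        · exact neg_le_of_abs_le (hM _)
        · exact Phi_null_id_le hp hs hη hK
    _ ≤ reg T p u n s η := le_csSup (bddAbove_regValues hM) (null_id_mem_regValues hs)

/-- A Lipschitz constant of `reg T p u n s` in the uniform norm, on paths bounded by `K`, when
`|u| ≤ M`. It is the factor of `Phi_le_add_of_norm_sub_le` with `D = 2 * K`, multiplied by `n`,
for a competitor with `n * Phi ≤ 2 * M + n * ((1 + T) * K ^ (p + 1))`. -/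
def regLipConst (T p : ℝ) (n : ℕ) (M K : ℝ) : ℝ :=
  2 ^ p / (2 * K) *
    (2 * M + n * ((1 + T) * K ^ (p + 1)) + n * ((1 + T) * (2 * K) ^ (p + 1)))

lemma regLipConst_pos (hT : 0 ≤ T) (hM : 0 < M) (hK : 0 < K) : 0 < regLipConst T p n M K := by
  unfold regLipConst
  positivity

lemma reg_le_reg_add_regLipConst_mul {δ : ℝ} (hp : 0 ≤ p) (hM : ∀ θ, |u θ| ≤ M)
    (hK0 : 0 < K) (hs : s ∈ Ioc 0 T) (hη : Measurable η) (hη' : Measurable η')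
    (hK : ∀ r ∈ Icc 0 T, ‖η r‖ ≤ K) (hK' : ∀ r ∈ Icc 0 T, ‖η' r‖ ≤ K) (hδK : δ ≤ 2 * K)
    (hδ : ∀ r ∈ Icc 0 T, ‖η r - η' r‖ ≤ δ) :
    reg T p u n s η ≤ reg T p u n s η' + regLipConst T p n M K * δ := by
  have hT : 0 ≤ T := hs.1.le.trans hs.2
  have hδ0 : 0 ≤ δ := (norm_nonneg _).trans (hδ T (right_mem_Icc.2 hT))
  have hM0 : 0 ≤ M := (abs_nonneg _).trans (hM (Theta.null d (Ioc_subset_Icc_self hs)))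
  have hC : 0 ≤ regLipConst T p n M K := by
    unfold regLipConst
    positivity
  refine csSup_le ⟨_, null_id_mem_regValues hs⟩ ?_
  rintro _ ⟨θ, ℓ, hθ, hℓ, rfl⟩
  rcases le_total (2 * M + n * ((1 + T) * K ^ (p + 1))) (n * Phi T p s η θ ℓ) with hlarge | hsmall
  · calc u θ - n * Phi T p s η θ ℓ
        ≤ -M - n * ((1 + T) * K ^ (p + 1)) := by linarith [le_of_abs_le (hM θ)]
      _ ≤ reg T p u n s η' := neg_sub_le_reg hp hM hs hη' hK'
      _ ≤ _ := le_add_of_nonneg_right (mul_nonneg hC hδ0)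
  · have hPhi : n * Phi T p s η' θ ℓ ≤ n * Phi T p s η θ ℓ + regLipConst T p n M K * δ :=
      calc n * Phi T p s η' θ ℓ
          ≤ n * (Phi T p s η θ ℓ + δ / (2 * K) *
              (2 ^ p * (Phi T p s η θ ℓ + (1 + T) * (2 * K) ^ (p + 1)))) := by
            gcongr
            exact Phi_le_add_of_norm_sub_le hp hs (by positivity) hδK hη hη' hK hK' hδ hℓ
        _ = n * Phi T p s η θ ℓ + 2 ^ p / (2 * K) *
              (n * Phi T p s η θ ℓ + n * ((1 + T) * (2 * K) ^ (p + 1))) * δ := by ring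
        _ ≤ _ := by
            unfold regLipConst
            gcongr
    have hle : u θ - n * Phi T p s η' θ ℓ ≤ reg T p u n s η' :=
      le_csSup (bddAbove_regValues hM) ⟨θ, ℓ, hθ, hℓ, rfl⟩
    linarith

theorem stmt9_general (hT : 0 ≤ T) (hp : 0 ≤ p) (hub : ∃ M : ℝ, ∀ θ, |u θ| ≤ M) (n : ℕ)
    (hK0 : 0 < K) :
    ∃ C > 0, ∀ s ∈ Ioc 0 T, ∀ η η' : ℝ → E d, Measurable η → Measurable η' →
      (∀ r ∈ Icc 0 T, ‖η r‖ ≤ K) → (∀ r ∈ Icc 0 T, ‖η' r‖ ≤ K) →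
      ∀ δ, (∀ r ∈ Icc 0 T, ‖η r - η' r‖ ≤ δ) →
        |reg T p u n s η - reg T p u n s η'| ≤ C * δ := by
  obtain ⟨M, hM, hM0⟩ : ∃ M, (∀ θ, |u θ| ≤ M) ∧ 0 < M :=
    hub.imp' (max · 1) fun M hM ↦ ⟨fun θ ↦ le_max_of_le_left (hM θ), by positivity⟩
  have hC := regLipConst_pos (p := p) (n := n) hT hM0 hK0
  refine ⟨_, hC, fun s hs η η' hη hη' hK hK' δ hδ ↦ ?_⟩
  have hmin : ∀ r ∈ Icc 0 T, ‖η r - η' r‖ ≤ min δ (2 * K) := fun r hr ↦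
    le_min (hδ r hr) ((norm_sub_le _ _).trans (by linarith [hK r hr, hK' r hr]))
  have hmin' : ∀ r ∈ Icc 0 T, ‖η' r - η r‖ ≤ min δ (2 * K) := fun r hr ↦
    norm_sub_rev (η r) (η' r) ▸ hmin r hr
  calc |reg T p u n s η - reg T p u n s η'| ≤ regLipConst T p n M K * min δ (2 * K) :=
        abs_sub_le_iff.2
          ⟨sub_le_iff_le_add'.2 <| reg_le_reg_add_regLipConst_mul hp hM hK0 hs hη hη' hK hK'
              (min_le_right _ _) hmin,
            sub_le_iff_le_add'.2 <| reg_le_reg_add_regLipConst_mul hp hM hK0 hs hη' hη hK' hK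
              (min_le_right _ _) hmin'⟩
    _ ≤ _ := mul_le_mul_of_nonneg_left (min_le_left _ _) hC.le

end Regularization

/-- (Lemma 5.7 (ii)) For bounded `u`, the function `u^{n,λ_i}(s,·)` is locally
Lipschitz, uniformly in `s ∈ (s_i, T]`: for every `R > 0` there is `C` with
`|u^{n,λ_i}(s,x) - u^{n,λ_i}(s,x')| ≤ C |x - x'|` whenever `|x|, |x'| ≤ R`. -/
theorem stmt9 (T : ℝ) (hT : 0 < T) (d : ℕ) (hd : 1 ≤ d) (p : ℝ) (hp : 1 ≤ p)
    (u : Theta T d → ℝ) (hub : ∃ M : ℝ, ∀ θ : Theta T d, |u θ| ≤ M)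
    (n : ℕ) (hn : 1 ≤ n)
    (m : ℕ) (sVec : Fin (m + 1) → ℝ) (hs0 : sVec 0 = 0) (hsmono : StrictMono sVec)
    (hsT : sVec (Fin.last m) ≤ T) (xs : Fin m → E d) :
    ∀ R > 0, ∃ C > 0, ∀ s ∈ Set.Ioc (sVec (Fin.last m)) T,
    ∀ x x' : E d, ‖x‖ ≤ R → ‖x'‖ ≤ R →
      |reg T p u n s (pcPath sVec (Fin.snoc xs x))
          - reg T p u n s (pcPath sVec (Fin.snoc xs x'))| ≤ C * ‖x - x'‖ := by
  intro R hR
  have hlast : 0 ≤ sVec (Fin.last m) := hs0 ▸ hsmono.monotone (Fin.zero_le _)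
  obtain ⟨C, hC, hreg⟩ := stmt9_general hT.le (zero_le_one.trans hp) hub n
    (show 0 < ∑ j, ‖xs j‖ + R by positivity)
  exact ⟨C, hC, fun s hs x x' hx hx' ↦ hreg s (Ioc_subset_Ioc_left hlast hs) _ _
    (measurable_pcPath _ _) (measurable_pcPath _ _) (fun r _ ↦ norm_pcPath_snoc_le hx _ _ r)
    (fun r _ ↦ norm_pcPath_snoc_le hx' _ _ r) _ fun r _ ↦ norm_pcPath_snoc_sub_le _ _ x x' r⟩
end
end

section
/- (Inequality (⋆)) For every odd integer p > 1 there exists a constant C ≥ 0, depending only on p, such that for all a, b ∈ ℝ^d: |a + b|^{p+1} ≤ |a|^{p+1} + (p+1)(a·b)|a|^{p−1} + C|b|^2(|b|^{p−1} + |a|^{p−1}). -/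
noncomputable section

/-!
Write `u = ‖a + b‖`, `v = ‖a‖`, `w = ‖b‖`, `s = p - 1`, so that `2 ⟪a, b⟫ = u² - v² - w²`.
Convexity of `t ↦ t ^ ((s + 2) / 2)` bounds `u ^ (s + 2) - v ^ (s + 2)` by
`(s + 2) / 2 * u ^ s * (u² - v²)`, with the slope taken at the endpoint `u²`. Moving the slope
to `v²` costs a multiple of `(u ^ s - v ^ s) * (u² - v²)`. This product is quadratic in `u - v`,
and `|u - v| ≤ w`.
-/

section Rpow

variable {x y s : ℝ}

lemma rpow_sub_rpow_le_mul_rpow_sub_one_mul_sub {q : ℝ} (hx : 0 ≤ x) (hy : 0 ≤ y) (hq : 1 ≤ q) :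
    x ^ q - y ^ q ≤ q * x ^ (q - 1) * (x - y) := by
  have hconvex := convexOn_rpow hq
  have hderiv : HasDerivAt (fun t : ℝ ↦ t ^ q) (q * x ^ (q - 1)) x :=
    Real.hasDerivAt_rpow_const (Or.inr hq)
  rcases lt_trichotomy x y with hxy | rfl | hyx
  · have hslope := hconvex.le_slope_of_hasDerivAt hx hy hxy hderiv
    rw [slope_def_field, le_div_iff₀ (sub_pos.2 hxy)] at hslope
    linarith
  · simp
  · have hslope := hconvex.slope_le_of_hasDerivAt hy hx hyx hderiv
    rwa [slope_def_field, div_le_iff₀ (sub_pos.2 hyx)] at hslope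

lemma rpow_add_two_sub_rpow_add_two_le (hx : 0 ≤ x) (hy : 0 ≤ y) (hs : 0 ≤ s) :
    x ^ (s + 2) - y ^ (s + 2) ≤ (s + 2) / 2 * x ^ s * (x ^ 2 - y ^ 2) := by
  have sq_rpow {t : ℝ} (ht : 0 ≤ t) (r : ℝ) : (t ^ 2) ^ (r / 2) = t ^ r := by
    rw [← Real.rpow_natCast_mul ht, Nat.cast_ofNat, mul_div_cancel₀ r two_ne_zero]
  have htangent := rpow_sub_rpow_le_mul_rpow_sub_one_mul_sub (sq_nonneg x) (sq_nonneg y)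
    (show 1 ≤ (s + 2) / 2 by linarith)
  rwa [show (s + 2) / 2 - 1 = s / 2 by ring, sq_rpow hx, sq_rpow hx, sq_rpow hy] at htangent

lemma rpow_sub_rpow_mul_le (hy : 0 ≤ y) (hyx : y ≤ x) (hs : 0 ≤ s) :
    (x ^ s - y ^ s) * x ≤ (s + 1) * x ^ s * (x - y) := by
  have hx : 0 ≤ x := hy.trans hyx
  calc (x ^ s - y ^ s) * x
      ≤ x ^ s * x - y ^ s * y := by
        linarith [mul_le_mul_of_nonneg_left hyx (Real.rpow_nonneg hy s)]
    _ = x ^ (s + 1) - y ^ (s + 1) := by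
        rw [Real.rpow_add_one' hx (by positivity), Real.rpow_add_one' hy (by positivity)]
    _ ≤ (s + 1) * x ^ s * (x - y) := by
        simpa only [add_sub_cancel_right] using
          rpow_sub_rpow_le_mul_rpow_sub_one_mul_sub hx hy (show 1 ≤ s + 1 by linarith)

lemma rpow_sub_rpow_mul_sq_sub_sq_le (hx : 0 ≤ x) (hy : 0 ≤ y) (hs : 0 ≤ s) :
    (x ^ s - y ^ s) * (x ^ 2 - y ^ 2) ≤ 2 * (s + 1) * max x y ^ s * (x - y) ^ 2 := by
  wlog hyx : y ≤ x generalizing x y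
  · rw [max_comm]
    linarith [this hy hx (le_of_not_ge hyx)]
  have hpow : 0 ≤ x ^ s - y ^ s := sub_nonneg.2 (Real.rpow_le_rpow hy hyx hs)
  have : 0 ≤ x - y := sub_nonneg.2 hyx
  rw [max_eq_left hyx]
  calc (x ^ s - y ^ s) * (x ^ 2 - y ^ 2)
      = (x ^ s - y ^ s) * (x + y) * (x - y) := by ring
    _ ≤ (x ^ s - y ^ s) * (x + x) * (x - y) := by gcongr
    _ = 2 * ((x ^ s - y ^ s) * x) * (x - y) := by ring
    _ ≤ 2 * ((s + 1) * x ^ s * (x - y)) * (x - y) := by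
        gcongr 2 * ?_ * _
        exact rpow_sub_rpow_mul_le hy hyx hs
    _ = 2 * (s + 1) * x ^ s * (x - y) ^ 2 := by ring

lemma add_rpow_le_two_rpow_mul_add_rpow (hx : 0 ≤ x) (hy : 0 ≤ y) (hs : 0 ≤ s) :
    (x + y) ^ s ≤ 2 ^ s * (x ^ s + y ^ s) := by
  calc (x + y) ^ s
      ≤ (2 * max x y) ^ s := by
        gcongr
        linarith [le_max_left x y, le_max_right x y]
    _ = 2 ^ s * max (x ^ s) (y ^ s) := by
        rw [Real.mul_rpow zero_le_two (le_max_of_le_left hx), Real.rpow_max hx hy hs]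
    _ ≤ 2 ^ s * (x ^ s + y ^ s) := by
        gcongr
        exact max_le_add_of_nonneg (Real.rpow_nonneg hx s) (Real.rpow_nonneg hy s)

end Rpow

lemma norm_add_rpow_sub_norm_rpow_mul_sq_sub_sq_le {E : Type*} [SeminormedAddCommGroup E]
    (a b : E) {s : ℝ} (hs : 0 ≤ s) :
    (‖a + b‖ ^ s - ‖a‖ ^ s) * (‖a + b‖ ^ 2 - ‖a‖ ^ 2) ≤
      2 * (s + 1) * 2 ^ s * ‖b‖ ^ 2 * (‖b‖ ^ s + ‖a‖ ^ s) := by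
  have hmax : max ‖a + b‖ ‖a‖ ≤ ‖b‖ + ‖a‖ :=
    max_le (add_comm ‖b‖ ‖a‖ ▸ norm_add_le a b) (le_add_of_nonneg_left (norm_nonneg b))
  have hdiff : |‖a + b‖ - ‖a‖| ≤ ‖b‖ := by
    simpa only [add_sub_cancel_left] using abs_norm_sub_norm_le (a + b) a
  calc (‖a + b‖ ^ s - ‖a‖ ^ s) * (‖a + b‖ ^ 2 - ‖a‖ ^ 2)
      ≤ 2 * (s + 1) * max ‖a + b‖ ‖a‖ ^ s * (‖a + b‖ - ‖a‖) ^ 2 :=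
        rpow_sub_rpow_mul_sq_sub_sq_le (norm_nonneg _) (norm_nonneg _) hs
    _ ≤ 2 * (s + 1) * (‖b‖ + ‖a‖) ^ s * ‖b‖ ^ 2 := by
        rw [← sq_abs (‖a + b‖ - ‖a‖)]
        gcongr
    _ ≤ 2 * (s + 1) * (2 ^ s * (‖b‖ ^ s + ‖a‖ ^ s)) * ‖b‖ ^ 2 := by
        gcongr
        exact add_rpow_le_two_rpow_mul_add_rpow (norm_nonneg b) (norm_nonneg a) hs
    _ = 2 * (s + 1) * 2 ^ s * ‖b‖ ^ 2 * (‖b‖ ^ s + ‖a‖ ^ s) := by ring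

theorem stmt12_general {E : Type*} [SeminormedAddCommGroup E] [InnerProductSpace ℝ E]
    {p : ℝ} (hp : 1 ≤ p) (a b : E) :
    ‖a + b‖ ^ (p + 1) ≤ ‖a‖ ^ (p + 1) + (p + 1) * inner ℝ a b * ‖a‖ ^ (p - 1) +
      (p + 1) ^ 2 * 2 ^ (p - 1) * ‖b‖ ^ 2 * (‖b‖ ^ (p - 1) + ‖a‖ ^ (p - 1)) := by
  obtain ⟨s, rfl⟩ : ∃ s, p = s + 1 := ⟨p - 1, by ring⟩
  have hs : 0 ≤ s := by linarith
  rw [add_sub_cancel_right, show s + 1 + 1 = s + 2 by ring]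
  have htangent := rpow_add_two_sub_rpow_add_two_le (norm_nonneg (a + b)) (norm_nonneg a) hs
  have hslope := mul_le_mul_of_nonneg_left (norm_add_rpow_sub_norm_rpow_mul_sq_sub_sq_le a b hs)
    (show 0 ≤ (s + 2) / 2 by positivity)
  have hsq : ‖a + b‖ ^ 2 - ‖a‖ ^ 2 = 2 * inner ℝ a b + ‖b‖ ^ 2 := by
    rw [norm_add_sq_real]
    ring
  have hremainder : (s + 2) / 2 * ‖b‖ ^ 2 * ‖a‖ ^ s ≤
      (s + 2) * 2 ^ s * ‖b‖ ^ 2 * (‖b‖ ^ s + ‖a‖ ^ s) := by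
    have htwo : 1 ≤ (2 : ℝ) ^ s := Real.one_le_rpow one_le_two hs
    gcongr
    · nlinarith
    · exact le_add_of_nonneg_left (by positivity)
  rw [hsq] at htangent hslope
  linarith

/-- (Inequality (⋆)) For every odd integer `p > 1` there is `C ≥ 0`, depending only
on `p`, such that for all `a, b ∈ ℝ^d`:
`|a+b|^{p+1} ≤ |a|^{p+1} + (p+1)(a·b)|a|^{p-1} + C|b|^2(|b|^{p-1} + |a|^{p-1})`. -/
theorem stmt12 (p : ℕ) (hodd : Odd p) (hp : 1 < p) :
    ∃ C : ℝ, 0 ≤ C ∧ ∀ (d : ℕ) (a b : EuclideanSpace ℝ (Fin d)),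
      ‖a + b‖ ^ (p + 1) ≤
        ‖a‖ ^ (p + 1) + ((p : ℝ) + 1) * (inner ℝ a b : ℝ) * ‖a‖ ^ (p - 1)
          + C * ‖b‖ ^ 2 * (‖b‖ ^ (p - 1) + ‖a‖ ^ (p - 1)) := by
  refine ⟨(p + 1) ^ 2 * 2 ^ (p - 1), by positivity, fun d a b ↦ ?_⟩
  exact_mod_cast Nat.cast_pred (R := ℝ) hp.pos ▸ stmt12_general (Nat.one_le_cast.2 hp.le) a b
end
end

section
/- (Time-change indicator estimate) Let T > 0, δ ≥ 0, and let ℓ : [0,T] → ℝ be nondecreasing with |ℓ(t) − t| ≤ δ for all t ∈ [0,T]. Then for every s ∈ ℝ, the Lebesgue measure of the set {t ∈ [0,T] : 1_{{t ≥ s}} ≠ 1_{{ℓ(t) ≥ s}}} is at most δ; equivalently, ∫_0^T |1_{{t ≥ s}} − 1_{{ℓ(t) ≥ s}}| dt ≤ δ. -/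
open MeasureTheory Set

noncomputable section

/-!
Both `{t | s ≤ t}` and `{t | s ≤ ℓ t}` are upper sets of the domain of `ℓ`, hence nested. So the
indicators disagree on one side of `s` only, and there only within distance `δ` of `s`: the
disagreement set lies in a single interval of length `δ`, rather than in one of length `2 * δ`
around `s`.
-/

theorem inter_Ici_subset_preimage_or_inter_preimage_subset_Ici {α β : Type*} [LinearOrder α]
    [Preorder β] {f : α → β} {A : Set α} (hf : MonotoneOn f A) (a : α) (b : β) :
    A ∩ Ici a ⊆ f ⁻¹' Ici b ∨ A ∩ f ⁻¹' Ici b ⊆ Ici a := by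
  by_contra! h
  obtain ⟨⟨u, ⟨huA, hau⟩, hbu⟩, ⟨v, ⟨hvA, hbv⟩, hav⟩⟩ := h.imp not_subset.1 not_subset.1
  have hvu : v ≤ u := (not_le.1 hav).le.trans hau
  exact hbu (le_trans hbv (hf hvA huA hvu))

theorem exists_setOf_not_le_iff_le_subset_Ico {G : Type*} [AddCommGroup G] [LinearOrder G]
    [IsOrderedAddMonoid G] {ℓ : G → G} {A : Set G} {δ : G} (hmono : MonotoneOn ℓ A)
    (hclose : ∀ t ∈ A, |ℓ t - t| ≤ δ) (s : G) :
    ∃ a, {t ∈ A | ¬(s ≤ t ↔ s ≤ ℓ t)} ⊆ Ico a (a + δ) := by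
  rcases inter_Ici_subset_preimage_or_inter_preimage_subset_Ici hmono s s with hsub | hsub
  · refine ⟨s - δ, fun t ⟨htA, hne⟩ ↦ ?_⟩
    have hts : ¬s ≤ t := fun hst ↦ hne (iff_of_true hst (hsub ⟨htA, hst⟩))
    have hsℓ : s ≤ ℓ t := by tauto
    have hℓt : ℓ t ≤ δ + t := sub_le_iff_le_add.1 (abs_sub_le_iff.1 (hclose t htA)).1
    rw [sub_add_cancel]
    exact ⟨sub_le_iff_le_add'.2 (hsℓ.trans hℓt), not_le.1 hts⟩
  · refine ⟨s, fun t ⟨htA, hne⟩ ↦ ?_⟩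
    have hℓs : ¬s ≤ ℓ t := fun hsℓ ↦ hne (iff_of_true (hsub ⟨htA, hsℓ⟩) hsℓ)
    have hst : s ≤ t := by tauto
    have htℓ : t ≤ ℓ t + δ := sub_le_iff_le_add'.1 (abs_sub_le_iff.1 (hclose t htA)).2
    exact ⟨hst, htℓ.trans_lt (add_lt_add_left (not_le.1 hℓs) δ)⟩

theorem volume_setOf_not_le_iff_le_le {ℓ : ℝ → ℝ} {A : Set ℝ} {δ : ℝ} (hmono : MonotoneOn ℓ A)
    (hclose : ∀ t ∈ A, |ℓ t - t| ≤ δ) (s : ℝ) :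
    volume {t ∈ A | ¬(s ≤ t ↔ s ≤ ℓ t)} ≤ ENNReal.ofReal δ := by
  obtain ⟨a, hsub⟩ := exists_setOf_not_le_iff_le_subset_Ico hmono hclose s
  calc
    volume {t ∈ A | ¬(s ≤ t ↔ s ≤ ℓ t)} ≤ volume (Ico a (a + δ)) := measure_mono hsub
    _ = ENNReal.ofReal δ := by rw [Real.volume_Ico, add_sub_cancel_left]

theorem norm_setIntegral_le_mul_measureReal_ne_zero {X E : Type*} [MeasurableSpace X]
    [NormedAddCommGroup E] [NormedSpace ℝ E] {μ : Measure X} {f : X → E} {A : Set X} {C : ℝ}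
    (hA : MeasurableSet A) (hC : ∀ x ∈ A, ‖f x‖ ≤ C) (hfin : μ {x ∈ A | f x ≠ 0} < ⊤) :
    ‖∫ x in A, f x ∂μ‖ ≤ C * μ.real {x ∈ A | f x ≠ 0} := by
  have hzero : ∀ x ∈ A \ {x ∈ A | f x ≠ 0}, f x = 0 := fun x hx ↦
    by_contra fun hne ↦ hx.2 ⟨hx.1, hne⟩
  rw [setIntegral_eq_of_subset_of_forall_sdiff_eq_zero hA (sep_subset _ _) hzero]
  exact norm_setIntegral_le_of_norm_le_const hfin fun x hx ↦ hC x hx.1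

theorem ite_one_zero_ne_iff {R : Type*} [Zero R] [One R] [NeZero (1 : R)] (p q : Prop)
    [Decidable p] [Decidable q] :
    (if p then (1 : R) else 0) ≠ (if q then (1 : R) else 0) ↔ ¬(p ↔ q) := by
  by_cases hp : p <;> by_cases hq : q <;> simp [hp, hq]

theorem stmt14_general {A : Set ℝ} (hA : MeasurableSet A) {δ : ℝ} (hδ : 0 ≤ δ) {ℓ : ℝ → ℝ}
    (hmono : MonotoneOn ℓ A) (hclose : ∀ t ∈ A, |ℓ t - t| ≤ δ) (s : ℝ) :
    volume {t ∈ A | (if s ≤ t then (1 : ℝ) else 0) ≠ (if s ≤ ℓ t then (1 : ℝ) else 0)} ≤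
      ENNReal.ofReal δ ∧
    (∫ t in A, |(if s ≤ t then (1 : ℝ) else 0) - (if s ≤ ℓ t then (1 : ℝ) else 0)|) ≤ δ := by
  set g : ℝ → ℝ := fun t ↦ |(if s ≤ t then (1 : ℝ) else 0) - (if s ≤ ℓ t then (1 : ℝ) else 0)|
  have hg_le : ∀ t ∈ A, ‖g t‖ ≤ 1 := fun t _ ↦ by
    simp only [g]
    split_ifs <;> norm_num
  have hg_ne : ∀ t, g t ≠ 0 ↔
      (if s ≤ t then (1 : ℝ) else 0) ≠ (if s ≤ ℓ t then (1 : ℝ) else 0) := fun t ↦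
    abs_ne_zero.trans sub_ne_zero
  have hvol : volume {t ∈ A | g t ≠ 0} ≤ ENNReal.ofReal δ := by
    simpa only [hg_ne, ite_one_zero_ne_iff] using volume_setOf_not_le_iff_le_le hmono hclose s
  refine ⟨by simpa only [hg_ne] using hvol, ?_⟩
  calc
    ∫ t in A, g t ≤ ‖∫ t in A, g t‖ := Real.le_norm_self _
    _ ≤ 1 * volume.real {t ∈ A | g t ≠ 0} :=
      norm_setIntegral_le_mul_measureReal_ne_zero hA hg_le (hvol.trans_lt ENNReal.ofReal_lt_top)
    _ ≤ δ := by
      rw [one_mul]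
      exact ENNReal.toReal_le_of_le_ofReal hδ hvol

/-- (Time-change indicator estimate) If `ℓ : [0,T] → ℝ` is nondecreasing with
`|ℓ(t) - t| ≤ δ` on `[0,T]`, then for every `s` the set where the indicators
`1_{{t ≥ s}}` and `1_{{ℓ(t) ≥ s}}` differ has Lebesgue measure at most `δ`;
equivalently `∫_0^T |1_{{t ≥ s}} - 1_{{ℓ(t) ≥ s}}| dt ≤ δ`. -/
theorem stmt14 (T : ℝ) (hT : 0 < T) (δ : ℝ) (hδ : 0 ≤ δ) (ℓ : ℝ → ℝ)
    (hmono : MonotoneOn ℓ (Set.Icc 0 T))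
    (hclose : ∀ t ∈ Set.Icc (0:ℝ) T, |ℓ t - t| ≤ δ) (s : ℝ) :
    volume {t ∈ Set.Icc (0:ℝ) T |
        (if s ≤ t then (1:ℝ) else 0) ≠ (if s ≤ ℓ t then (1:ℝ) else 0)} ≤
      ENNReal.ofReal δ ∧
    (∫ t in (0:ℝ)..T, |(if s ≤ t then (1:ℝ) else 0) - (if s ≤ ℓ t then (1:ℝ) else 0)|) ≤ δ := by
  rw [intervalIntegral.integral_of_le hT.le, ← integral_Icc_eq_integral_Ioc]
  exact stmt14_general measurableSet_Icc hδ hmono hclose s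
end
end
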